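/- arXiv:math/0403509 — 9 statements merged into one kernel-verified Lean document; each statement's English description precedes it below -/
import Mathlib

section
/- Let A be a vector space over a field k equipped with two bilinear binary operations ⊢ and ⊣ such that (A,⊢) and (A,⊣) are both associative, and for all x,y,z ∈ A: (D1) x⊢(y⊣z) = (x⊢y)⊣z, (D2) x⊣(y⊢z) = x⊣(y⊣z), (D3) (x⊣y)⊢z = (x⊢y)⊢z. Then the bracket defined by [x,y] := x⊢y − y⊣x satisfies the left Leibniz identity [x,[y,z]] = [[x,y],z] + [y,[x,z]] for all x,y,z ∈ A. -/
/-!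
Write `L_x = (x ⊢ ·)`, `R_x = (· ⊣ x)` and `ad_x = [x, ·] = L_x - R_x`. Associativity of `⊢` and
(D3) give `L_[x,y] = ⁅L_x, L_y⁆`; associativity of `⊣` and (D2) give `R_[x,y] = -⁅R_x, R_y⁆`; and
(D1) says that every `L_x` commutes with every `R_y`. Hence
`⁅ad_x, ad_y⁆ = ⁅L_x, L_y⁆ + ⁅R_x, R_y⁆ = L_[x,y] - R_[x,y] = ad_[x,y]`,
which is the left Leibniz identity.
-/

theorem lie_sub_sub_of_commute {S : Type*} [NonUnitalNonAssocRing S] {a b c d : S}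
    (had : Commute a d) (hbc : Commute b c) : ⁅a - b, c - d⁆ = ⁅a, c⁆ + ⁅b, d⁆ := by
  simp only [Ring.lie_def, sub_mul, mul_sub, had.eq, hbc.eq]
  abel

section Dialgebra

variable {R A : Type*} [CommSemiring R] [AddCommGroup A] [Module R A]

/-- The bracket `[x, y] = x ⊢ y - y ⊣ x` of two bilinear operations `lhd = ⊢` and `dhv = ⊣`. It is
valued in `Module.End R A`, so that `⁅[x, ·], [y, ·]⁆` is the commutator of operators. -/
def dialgebraBracket (lhd dhv : A →ₗ[R] A →ₗ[R] A) : A →ₗ[R] Module.End R A :=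
  lhd - dhv.flip

variable {lhd dhv : A →ₗ[R] A →ₗ[R] A}

theorem dialgebraBracket_apply (x : A) :
    dialgebraBracket lhd dhv x = lhd x - dhv.flip x :=
  rfl

theorem dialgebraBracket_apply_apply (x y : A) :
    dialgebraBracket lhd dhv x y = lhd x y - dhv y x :=
  rfl

theorem lhd_dialgebraBracket (lhd_assoc : ∀ x y z : A, lhd (lhd x y) z = lhd x (lhd y z))
    (D3 : ∀ x y z : A, lhd (dhv x y) z = lhd (lhd x y) z) (x y : A) :
    lhd (dialgebraBracket lhd dhv x y) = ⁅lhd x, lhd y⁆ := by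
  ext z
  calc lhd (dialgebraBracket lhd dhv x y) z
      = lhd (lhd x y) z - lhd (dhv y x) z := by
        rw [dialgebraBracket_apply_apply, map_sub, LinearMap.sub_apply]
    _ = lhd x (lhd y z) - lhd y (lhd x z) := by rw [D3, lhd_assoc, lhd_assoc]

theorem flip_dhv_dialgebraBracket (dhv_assoc : ∀ x y z : A, dhv (dhv x y) z = dhv x (dhv y z))
    (D2 : ∀ x y z : A, dhv x (lhd y z) = dhv x (dhv y z)) (x y : A) :
    dhv.flip (dialgebraBracket lhd dhv x y) = -⁅dhv.flip x, dhv.flip y⁆ := by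
  ext z
  calc dhv z (dialgebraBracket lhd dhv x y)
      = dhv z (lhd x y) - dhv z (dhv y x) := by rw [dialgebraBracket_apply_apply, map_sub]
    _ = dhv (dhv z x) y - dhv (dhv z y) x := by rw [D2, dhv_assoc, dhv_assoc]
    _ = -(dhv (dhv z y) x - dhv (dhv z x) y) := (neg_sub _ _).symm

theorem commute_lhd_flip_dhv (D1 : ∀ x y z : A, lhd x (dhv y z) = dhv (lhd x y) z) (x y : A) :
    Commute (lhd x) (dhv.flip y) :=
  LinearMap.ext fun z => D1 x z y

theorem lie_dialgebraBracket
    (lhd_assoc : ∀ x y z : A, lhd (lhd x y) z = lhd x (lhd y z))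
    (dhv_assoc : ∀ x y z : A, dhv (dhv x y) z = dhv x (dhv y z))
    (D1 : ∀ x y z : A, lhd x (dhv y z) = dhv (lhd x y) z)
    (D2 : ∀ x y z : A, dhv x (lhd y z) = dhv x (dhv y z))
    (D3 : ∀ x y z : A, lhd (dhv x y) z = lhd (lhd x y) z) (x y : A) :
    ⁅dialgebraBracket lhd dhv x, dialgebraBracket lhd dhv y⁆ =
      dialgebraBracket lhd dhv (dialgebraBracket lhd dhv x y) :=
  calc ⁅dialgebraBracket lhd dhv x, dialgebraBracket lhd dhv y⁆
      = ⁅lhd x, lhd y⁆ + ⁅dhv.flip x, dhv.flip y⁆ := by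
        rw [dialgebraBracket_apply, dialgebraBracket_apply,
          lie_sub_sub_of_commute (commute_lhd_flip_dhv D1 x y) (commute_lhd_flip_dhv D1 y x).symm]
    _ = lhd (dialgebraBracket lhd dhv x y) - dhv.flip (dialgebraBracket lhd dhv x y) := by
        rw [lhd_dialgebraBracket lhd_assoc D3, flip_dhv_dialgebraBracket dhv_assoc D2,
          sub_neg_eq_add]
    _ = dialgebraBracket lhd dhv (dialgebraBracket lhd dhv x y) :=
        (dialgebraBracket_apply _).symm

theorem dialgebra_bracket_leibniz_general
    (lhd_assoc : ∀ x y z : A, lhd (lhd x y) z = lhd x (lhd y z))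
    (dhv_assoc : ∀ x y z : A, dhv (dhv x y) z = dhv x (dhv y z))
    (D1 : ∀ x y z : A, lhd x (dhv y z) = dhv (lhd x y) z)
    (D2 : ∀ x y z : A, dhv x (lhd y z) = dhv x (dhv y z))
    (D3 : ∀ x y z : A, lhd (dhv x y) z = lhd (lhd x y) z) (x y z : A) :
    dialgebraBracket lhd dhv x (dialgebraBracket lhd dhv y z) =
      dialgebraBracket lhd dhv (dialgebraBracket lhd dhv x y) z +
        dialgebraBracket lhd dhv y (dialgebraBracket lhd dhv x z) :=
  sub_eq_iff_eq_add.mp <|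
    LinearMap.congr_fun (lie_dialgebraBracket lhd_assoc dhv_assoc D1 D2 D3 x y) z

end Dialgebra

/-- If `(A, ⊢, ⊣)` is a dialgebra over a field `k` (two bilinear associative
operations satisfying (D1), (D2), (D3)), then the bracket `[x,y] := x⊢y − y⊣x`
satisfies the left Leibniz identity. -/
theorem dialgebra_bracket_leibniz {k A : Type*} [Field k] [AddCommGroup A] [Module k A]
    (lhd dhv : A →ₗ[k] A →ₗ[k] A)
    (lhd_assoc : ∀ x y z : A, lhd (lhd x y) z = lhd x (lhd y z))
    (dhv_assoc : ∀ x y z : A, dhv (dhv x y) z = dhv x (dhv y z))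
    (D1 : ∀ x y z : A, lhd x (dhv y z) = dhv (lhd x y) z)
    (D2 : ∀ x y z : A, dhv x (lhd y z) = dhv x (dhv y z))
    (D3 : ∀ x y z : A, lhd (dhv x y) z = lhd (lhd x y) z) :
    ∀ x y z : A,
      (fun a b : A => lhd a b - dhv b a) x ((fun a b : A => lhd a b - dhv b a) y z)
        = (fun a b : A => lhd a b - dhv b a) ((fun a b : A => lhd a b - dhv b a) x y) z
          + (fun a b : A => lhd a b - dhv b a) y ((fun a b : A => lhd a b - dhv b a) x z) :=
  dialgebra_bracket_leibniz_general lhd_assoc dhv_assoc D1 D2 D3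
end

section
/- Let (G,*) be a right group. Then for all x ∈ G, x*1 = (x⁻¹)⁻¹ and ((x⁻¹)⁻¹)⁻¹ = x⁻¹. -/
/-- A right group: a semigroup with a left identity `1` and right inverses `x⁻¹` with respect to it.
The identity and the inversion are part of the data, since a right group may have several left
identities. -/
class RightGroup (G : Type*) extends Semigroup G, One G, Inv G where
  protected one_mul (x : G) : 1 * x = x
  protected mul_inv_cancel (x : G) : x * x⁻¹ = 1

namespace RightGroup

variable {G : Type*} [RightGroup G]

theorem mul_one_eq_inv_inv (x : G) : x * 1 = x⁻¹⁻¹ :=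
  calc
    x * 1 = x * (x⁻¹ * x⁻¹⁻¹) := by rw [RightGroup.mul_inv_cancel]
    _ = x * x⁻¹ * x⁻¹⁻¹ := (mul_assoc _ _ _).symm
    _ = x⁻¹⁻¹ := by rw [RightGroup.mul_inv_cancel, RightGroup.one_mul]

theorem inv_inv_mul (x y : G) : x⁻¹⁻¹ * y = x * y := by
  rw [← mul_one_eq_inv_inv, mul_assoc, RightGroup.one_mul]

protected theorem inv_mul_cancel_left (x y : G) : x⁻¹ * (x * y) = y :=
  calc
    x⁻¹ * (x * y) = x⁻¹ * (x⁻¹⁻¹ * y) := by rw [inv_inv_mul]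
    _ = x⁻¹ * x⁻¹⁻¹ * y := (mul_assoc _ _ _).symm
    _ = y := by rw [RightGroup.mul_inv_cancel, RightGroup.one_mul]

theorem inv_mul_one (x : G) : x⁻¹ * 1 = x⁻¹ := by
  rw [← RightGroup.mul_inv_cancel x, RightGroup.inv_mul_cancel_left]

theorem inv_inv_inv (x : G) : x⁻¹⁻¹⁻¹ = x⁻¹ := by
  rw [← mul_one_eq_inv_inv, inv_mul_one]

end RightGroup

/-- In a right group, `x*1 = (x⁻¹)⁻¹` and `((x⁻¹)⁻¹)⁻¹ = x⁻¹` for all `x`. -/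
theorem rightGroup_inv_inv {G : Type*} (mul : G → G → G) (one : G) (inv : G → G)
    (assoc : ∀ x y z : G, mul (mul x y) z = mul x (mul y z))
    (one_mul : ∀ x : G, mul one x = x)
    (mul_inv : ∀ x : G, mul x (inv x) = one) :
    ∀ x : G, mul x one = inv (inv x) ∧ inv (inv (inv x)) = inv x := by
  let _ : RightGroup G :=
    { mul := mul
      one := one
      inv := inv
      mul_assoc := assoc
      one_mul := one_mul
      mul_inv_cancel := mul_inv }
  exact fun x => ⟨RightGroup.mul_one_eq_inv_inv x, RightGroup.inv_inv_inv x⟩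
end

section
/- Let (G,⊢,⊣,1,⁻¹) be a digroup. Then an element e ∈ G satisfies e⊢x = x for all x ∈ G if and only if it satisfies x⊣e = x for all x ∈ G. -/
/-- A digroup: a set `G` with two associative operations `⊢` (`lhd`) and `⊣` (`dhv`),
a distinguished bar-unit `one`, and an inversion `inv`, satisfying the digroup
axioms (G1)–(G6). -/
class Digroup (G : Type*) where
  lhd : G → G → G           -- `x ⊢ y`
  dhv : G → G → G           -- `x ⊣ y`
  one : G
  inv : G → G
  lhd_assoc : ∀ x y z : G, lhd (lhd x y) z = lhd x (lhd y z)
  dhv_assoc : ∀ x y z : G, dhv (dhv x y) z = dhv x (dhv y z)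
  G2 : ∀ x y z : G, lhd x (dhv y z) = dhv (lhd x y) z
  G3 : ∀ x y z : G, dhv x (lhd y z) = dhv x (dhv y z)
  G4 : ∀ x y z : G, lhd (dhv x y) z = lhd (lhd x y) z
  one_lhd : ∀ x : G, lhd one x = x
  dhv_one : ∀ x : G, dhv x one = x
  lhd_inv : ∀ x : G, lhd x (inv x) = one
  inv_dhv : ∀ x : G, dhv (inv x) x = one

open Digroup

/-- Conjugation in a digroup: `x ∘ y := x ⊢ (y ⊣ x⁻¹)`. -/
def Digroup.conj {G : Type*} [Digroup G] (x y : G) : G := lhd x (dhv y (inv x))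

section Neutral

variable {α : Type*} {u e e' : α}

theorem left_neutral_iff_right_inverse_eq {op : α → α → α}
    (op_assoc : ∀ x y z, op (op x y) z = op x (op y z))
    (left_id : ∀ x, op u x = x) (right_inv : op e e' = u) :
    (∀ x, op e x = x) ↔ e' = u := by
  constructor
  · intro left_neutral
    rw [← right_inv, left_neutral]
  · rintro rfl x
    calc op e x = op e (op e' x) := by rw [left_id]
      _ = op (op e e') x := (op_assoc e e' x).symm
      _ = x := by rw [right_inv, left_id]

theorem right_neutral_iff_left_inverse_eq {op : α → α → α}
    (op_assoc : ∀ x y z, op (op x y) z = op x (op y z))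
    (right_id : ∀ x, op x u = x) (left_inv : op e' e = u) :
    (∀ x, op x e = x) ↔ e' = u :=
  left_neutral_iff_right_inverse_eq (op := fun x y => op y x)
    (fun x y z => (op_assoc z y x).symm) right_id left_inv

theorem digroup_bar_unit_iff_general {l r : α → α → α}
    (l_assoc : ∀ x y z, l (l x y) z = l x (l y z))
    (r_assoc : ∀ x y z, r (r x y) z = r x (r y z))
    (left_id : ∀ x, l u x = x) (right_id : ∀ x, r x u = x)
    (right_inv : l e e' = u) (left_inv : r e' e = u) :
    (∀ x, l e x = x) ↔ (∀ x, r x e = x) :=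
  (left_neutral_iff_right_inverse_eq l_assoc left_id right_inv).trans
    (right_neutral_iff_left_inverse_eq r_assoc right_id left_inv).symm

end Neutral

/-- In a digroup, `e` is a left neutral element for `⊢` iff it is a right
neutral element for `⊣`. -/
theorem digroup_bar_unit_iff {G : Type*} [Digroup G] (e : G) :
    (∀ x : G, lhd e x = x) ↔ (∀ x : G, dhv x e = x) :=
  digroup_bar_unit_iff_general lhd_assoc dhv_assoc one_lhd dhv_one (lhd_inv e) (inv_dhv e)
end

section
/- Let (G,⊢,⊣,1,⁻¹) be a digroup. Then x⊢1 = 1⊣x for all x ∈ G. -/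
open Digroup

theorem digroup_lhd_one_eq_one_dhv_general {G : Type*} {lhd dhv : G → G → G}
    (lhd_dhv_assoc : ∀ x y z : G, lhd x (dhv y z) = dhv (lhd x y) z) {e x y : G}
    (lhd_eq : lhd x y = e) (dhv_eq : dhv y x = e) : lhd x e = dhv e x :=
  calc
    lhd x e = lhd x (dhv y x) := by rw [dhv_eq]
    _ = dhv (lhd x y) x := lhd_dhv_assoc x y x
    _ = dhv e x := by rw [lhd_eq]

/-- In a digroup, `x ⊢ 1 = 1 ⊣ x` for all `x`. -/
theorem digroup_lhd_one_eq_one_dhv {G : Type*} [Digroup G] (x : G) :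
    lhd x one = dhv one x :=
  digroup_lhd_one_eq_one_dhv_general G2 (lhd_inv x) (inv_dhv x)
end

section
/- Let (G,⊢,⊣,1,⁻¹) be a digroup. Then for all x,y ∈ G, (x⊢y)⁻¹ = y⁻¹⊢x⁻¹ = y⁻¹⊣x⁻¹ = (x⊣y)⁻¹. -/
open Digroup

/-!
By (G4), `x ⊢ y` and `x ⊣ y` have the same left translation for `⊢`, so `x⁻¹ ⊣ x = 1` shows that
`x⁻¹ ⊢ ·` undoes `x ⊢ ·`; hence `x⁻¹` is the only solution `z` of `x ⊢ z = 1`. The two products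
`y⁻¹ ⊢ x⁻¹` and `y⁻¹ ⊣ x⁻¹` agree because `1`, in general only a one-sided unit for each operation,
is two-sided on inverses, so that it can be inserted between the factors and moved across by (G2).
-/

namespace Digroup

variable {G : Type*} [Digroup G]

lemma inv_lhd_cancel_left (x y : G) : lhd (inv x) (lhd x y) = y := by
  rw [← lhd_assoc, ← G4, inv_dhv, one_lhd]

lemma inv_lhd_one (x : G) : lhd (inv x) one = inv x := by
  rw [← lhd_inv x, inv_lhd_cancel_left]

lemma one_dhv_inv (x : G) : dhv one (inv x) = inv x := by
  rw [← inv_dhv x, dhv_assoc, ← G3, lhd_inv, dhv_one]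

lemma eq_inv_of_lhd_eq_one {x z : G} (h : lhd x z = one) : z = inv x := by
  rw [← inv_lhd_cancel_left x z, h, inv_lhd_one]

lemma inv_lhd_inv_eq_inv_dhv_inv (x y : G) : lhd (inv x) (inv y) = dhv (inv x) (inv y) :=
  calc lhd (inv x) (inv y)
    _ = lhd (inv x) (dhv one (inv y)) := by rw [one_dhv_inv]
    _ = dhv (lhd (inv x) one) (inv y) := G2 _ _ _
    _ = dhv (inv x) (inv y) := by rw [inv_lhd_one]

lemma lhd_inv_rev (x y : G) : inv (lhd x y) = lhd (inv y) (inv x) := by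
  refine (eq_inv_of_lhd_eq_one ?_).symm
  calc lhd (lhd x y) (lhd (inv y) (inv x))
    _ = lhd x (lhd (lhd y (inv y)) (inv x)) := by simp only [lhd_assoc]
    _ = one := by rw [lhd_inv, one_lhd, lhd_inv]

lemma inv_lhd_eq_inv_dhv (x y : G) : inv (lhd x y) = inv (dhv x y) := by
  apply eq_inv_of_lhd_eq_one
  rw [G4, lhd_inv]

lemma dhv_inv_rev (x y : G) : inv (dhv x y) = dhv (inv y) (inv x) := by
  rw [← inv_lhd_eq_inv_dhv, lhd_inv_rev, inv_lhd_inv_eq_inv_dhv_inv]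

end Digroup

/-- In a digroup, `(x⊢y)⁻¹ = y⁻¹⊢x⁻¹ = y⁻¹⊣x⁻¹ = (x⊣y)⁻¹` for all `x, y`. -/
theorem digroup_inv_of_products {G : Type*} [Digroup G] (x y : G) :
    inv (lhd x y) = lhd (inv y) (inv x) ∧
    lhd (inv y) (inv x) = dhv (inv y) (inv x) ∧
    dhv (inv y) (inv x) = inv (dhv x y) :=
  ⟨lhd_inv_rev x y, inv_lhd_inv_eq_inv_dhv_inv y x, (dhv_inv_rev x y).symm⟩
end

section
/- Let (G,⊢,⊣,1,⁻¹) be a digroup with conjugation x∘y := x⊢(y⊣x⁻¹). If e ∈ G is a bar-unit (i.e., e⊢y = y and y⊣e = y for all y ∈ G), then for every x ∈ G the element x∘e is again a bar-unit. -/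
open Digroup

namespace Digroup

variable {G : Type*} [Digroup G]

theorem lhd_inv_cancel_left (x y : G) : lhd x (lhd (inv x) y) = y := by
  rw [← lhd_assoc, lhd_inv, one_lhd]

theorem dhv_inv_cancel_right (y x : G) : dhv (dhv y x) (inv x) = y :=
  calc dhv (dhv y x) (inv x)
    _ = dhv y (dhv x (inv x)) := dhv_assoc y x (inv x)
    _ = dhv y (lhd x (inv x)) := (G3 y x (inv x)).symm
    _ = y := by rw [lhd_inv, dhv_one]

theorem conj_lhd (x z y : G) : lhd (conj x z) y = lhd x (lhd z (lhd (inv x) y)) :=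
  calc lhd (lhd x (dhv z (inv x))) y
    _ = lhd x (lhd (dhv z (inv x)) y) := lhd_assoc x (dhv z (inv x)) y
    _ = lhd x (lhd z (lhd (inv x) y)) := by rw [G4, lhd_assoc]

theorem dhv_conj (y x z : G) : dhv y (conj x z) = dhv (dhv (dhv y x) z) (inv x) :=
  calc dhv y (lhd x (dhv z (inv x)))
    _ = dhv y (dhv x (dhv z (inv x))) := G3 y x (dhv z (inv x))
    _ = dhv (dhv (dhv y x) z) (inv x) := by rw [dhv_assoc, dhv_assoc]

end Digroup

/-- In a digroup, if `e` is a bar-unit then so is `x ∘ e` for every `x`. -/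
theorem digroup_conj_bar_unit {G : Type*} [Digroup G] (e : G)
    (he : ∀ y : G, lhd e y = y ∧ dhv y e = y) (x : G) :
    ∀ y : G, lhd (conj x e) y = y ∧ dhv y (conj x e) = y := by
  intro y
  constructor
  · rw [conj_lhd, (he _).1, lhd_inv_cancel_left]
  · rw [dhv_conj, (he _).2, dhv_inv_cancel_right]
end

section
/- Let (G,⊢,⊣,1,⁻¹) be a digroup with conjugation x∘y := x⊢(y⊣x⁻¹). Then for all x,y,z ∈ G: x∘(y⊢z) = (x∘y)⊢(x∘z) and x∘(y⊣z) = (x∘y)⊣(x∘z). -/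
open Digroup

/-- A dimonoid in the sense of Loday: two associative operations `⊢` (`lhd`) and `⊣` (`dhv`) linked
by (G2)–(G4). It is what remains of a digroup without its unit and inversion, and is where
`y ↦ a ⊢ (y ⊣ b)` makes sense for unrelated `a` and `b`. -/
class Dimonoid (G : Type*) where
  lhd : G → G → G
  dhv : G → G → G
  lhd_assoc : ∀ x y z : G, lhd (lhd x y) z = lhd x (lhd y z)
  dhv_assoc : ∀ x y z : G, dhv (dhv x y) z = dhv x (dhv y z)
  lhd_dhv_assoc : ∀ x y z : G, lhd x (dhv y z) = dhv (lhd x y) z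
  dhv_lhd_eq_dhv_dhv : ∀ x y z : G, dhv x (lhd y z) = dhv x (dhv y z)
  dhv_lhd_eq_lhd_lhd : ∀ x y z : G, lhd (dhv x y) z = lhd (lhd x y) z

namespace Dimonoid

variable {G : Type*} [Dimonoid G]

/-- A bar-unit of a dimonoid: neutral on the left for `⊢` and on the right for `⊣`. A dimonoid may
have many of them, so this is a predicate rather than part of the structure. -/
structure IsBarUnit (e : G) : Prop where
  lhd_eq : ∀ w : G, lhd e w = w
  dhv_eq : ∀ w : G, dhv w e = w

/-- The two-sided multiplication `y ↦ a ⊢ (y ⊣ b)`, which is conjugation by `a` in a digroup when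
`b = a⁻¹`. -/
def sandwich (a b y : G) : G := lhd a (dhv y b)

variable {a b : G}

theorem IsBarUnit.lhd_cancel_middle (h : IsBarUnit (dhv b a)) (v w : G) :
    lhd (dhv v b) (lhd a w) = lhd v w :=
  calc lhd (dhv v b) (lhd a w)
    _ = lhd v (lhd (lhd b a) w) := by rw [dhv_lhd_eq_lhd_lhd, lhd_assoc, lhd_assoc]
    _ = lhd v (lhd (dhv b a) w) := by rw [dhv_lhd_eq_lhd_lhd]
    _ = lhd v w := by rw [h.lhd_eq]

theorem IsBarUnit.dhv_cancel_middle (h : IsBarUnit (dhv b a)) (v w : G) :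
    dhv (dhv v b) (lhd a w) = dhv v w :=
  calc dhv (dhv v b) (lhd a w)
    _ = dhv (dhv v b) (dhv a w) := dhv_lhd_eq_dhv_dhv _ _ _
    _ = dhv (dhv v (dhv b a)) w := by simp only [dhv_assoc]
    _ = dhv v w := by rw [h.dhv_eq]

theorem IsBarUnit.sandwich_lhd (h : IsBarUnit (dhv b a)) (y z : G) :
    sandwich a b (lhd y z) = lhd (sandwich a b y) (sandwich a b z) :=
  calc lhd a (dhv (lhd y z) b)
    _ = lhd a (lhd y (dhv z b)) := by rw [lhd_dhv_assoc y]
    _ = lhd a (lhd (dhv y b) (lhd a (dhv z b))) := by rw [h.lhd_cancel_middle]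
    _ = lhd (lhd a (dhv y b)) (lhd a (dhv z b)) := (lhd_assoc _ _ _).symm

theorem IsBarUnit.sandwich_dhv (h : IsBarUnit (dhv b a)) (y z : G) :
    sandwich a b (dhv y z) = dhv (sandwich a b y) (sandwich a b z) :=
  calc lhd a (dhv (dhv y z) b)
    _ = lhd a (dhv y (dhv z b)) := by rw [dhv_assoc]
    _ = lhd a (dhv (dhv y b) (lhd a (dhv z b))) := by rw [h.dhv_cancel_middle]
    _ = dhv (lhd a (dhv y b)) (lhd a (dhv z b)) := lhd_dhv_assoc _ _ _

end Dimonoid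

instance Digroup.toDimonoid {G : Type*} [Digroup G] : Dimonoid G where
  lhd := lhd
  dhv := dhv
  lhd_assoc := lhd_assoc
  dhv_assoc := dhv_assoc
  lhd_dhv_assoc := G2
  dhv_lhd_eq_dhv_dhv := G3
  dhv_lhd_eq_lhd_lhd := G4

theorem Digroup.isBarUnit_inv_dhv {G : Type*} [Digroup G] (x : G) :
    Dimonoid.IsBarUnit (Dimonoid.dhv (inv x) x) where
  lhd_eq w := (congrArg (lhd · w) (inv_dhv x)).trans (one_lhd w)
  dhv_eq w := (congrArg (dhv w) (inv_dhv x)).trans (dhv_one w)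

theorem digroup_conj_distrib_general {G : Type*} [Dimonoid G] {a b : G}
    (h : Dimonoid.IsBarUnit (Dimonoid.dhv b a)) (y z : G) :
    Dimonoid.sandwich a b (Dimonoid.lhd y z) =
      Dimonoid.lhd (Dimonoid.sandwich a b y) (Dimonoid.sandwich a b z) ∧
    Dimonoid.sandwich a b (Dimonoid.dhv y z) =
      Dimonoid.dhv (Dimonoid.sandwich a b y) (Dimonoid.sandwich a b z) :=
  ⟨h.sandwich_lhd y z, h.sandwich_dhv y z⟩

/-- In a digroup, conjugation distributes over both products:
`x∘(y⊢z) = (x∘y)⊢(x∘z)` and `x∘(y⊣z) = (x∘y)⊣(x∘z)`. -/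
theorem digroup_conj_distrib {G : Type*} [Digroup G] (x y z : G) :
    conj x (lhd y z) = lhd (conj x y) (conj x z) ∧
    conj x (dhv y z) = dhv (conj x y) (conj x z) :=
  digroup_conj_distrib_general (isBarUnit_inv_dhv x) y z
end

section
/- Let H be a group acting (on the left) on a set M, and suppose e ∈ M is a fixed point of the action (h • e = e for all h ∈ H). On G := M × H define (u,h)⊢(v,k) := (h • v, h*k), (u,h)⊣(v,k) := (u, h*k), distinguished element 1 := (e,1), and (u,h)⁻¹ := (e, h⁻¹). Then (G,⊢,⊣,1,⁻¹) satisfies all the digroup axioms: ⊢ and ⊣ are associative, x⊢(y⊣z) = (x⊢y)⊣z, x⊣(y⊢z) = x⊣(y⊣z), (x⊣y)⊢z = (x⊢y)⊢z, 1⊢x = x, x⊣1 = x, x⊢x⁻¹ = 1, and x⁻¹⊣x = 1 for all x,y,z ∈ G. -/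
/-- The left product on `G := M × H`: `(u,h) ⊢ (v,k) := (h • v, h*k)`. -/
def prodLhd {H M : Type*} [Group H] [MulAction H M] (x y : M × H) : M × H :=
  (x.2 • y.1, x.2 * y.2)

/-- The right product on `G := M × H`: `(u,h) ⊣ (v,k) := (u, h*k)`. -/
def prodDhv {H M : Type*} [Group H] [MulAction H M] (x y : M × H) : M × H :=
  (x.1, x.2 * y.2)

/-- Inversion on `G := M × H` (relative to the fixed point `e`): `(u,h)⁻¹ := (e, h⁻¹)`. -/
def prodInv {H M : Type*} [Group H] [MulAction H M] (e : M) (x : M × H) : M × H :=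
  (e, x.2⁻¹)

section ProdDigroup

variable {H M : Type*} [Group H] [MulAction H M]

theorem prodLhd_assoc (x y z : M × H) :
    prodLhd (prodLhd x y) z = prodLhd x (prodLhd y z) :=
  Prod.ext (mul_smul x.2 y.2 z.1) (mul_assoc x.2 y.2 z.2)

theorem prodDhv_assoc (x y z : M × H) :
    prodDhv (prodDhv x y) z = prodDhv x (prodDhv y z) :=
  Prod.ext rfl (mul_assoc x.2 y.2 z.2)

theorem prodLhd_prodDhv_assoc (x y z : M × H) :
    prodLhd x (prodDhv y z) = prodDhv (prodLhd x y) z :=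
  Prod.ext rfl (mul_assoc x.2 y.2 z.2).symm

theorem prodDhv_congr_right (x : M × H) {y z : M × H} (hyz : y.2 = z.2) :
    prodDhv x y = prodDhv x z :=
  Prod.ext rfl (congrArg (x.2 * ·) hyz)

theorem prodLhd_congr_left {x y : M × H} (hxy : x.2 = y.2) (z : M × H) :
    prodLhd x z = prodLhd y z :=
  Prod.ext (congrArg (· • z.1) hxy) (congrArg (· * z.2) hxy)

theorem mk_one_prodLhd (u : M) (x : M × H) : prodLhd (u, (1 : H)) x = x :=
  Prod.ext (one_smul H x.1) (one_mul x.2)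

theorem prodDhv_mk_one (x : M × H) (u : M) : prodDhv x (u, (1 : H)) = x :=
  Prod.ext rfl (mul_one x.2)

theorem prodLhd_prodInv {e : M} {x : M × H} (hx : x.2 • e = e) :
    prodLhd x (prodInv e x) = (e, (1 : H)) :=
  Prod.ext hx (mul_inv_cancel x.2)

theorem prodInv_prodDhv (e : M) (x : M × H) : prodDhv (prodInv e x) x = (e, (1 : H)) :=
  Prod.ext rfl (inv_mul_cancel x.2)

end ProdDigroup

/-- If the group `H` acts on `M` with a fixed point `e`, then
`G := M × H` with `(u,h)⊢(v,k) := (h•v, h*k)`, `(u,h)⊣(v,k) := (u, h*k)`,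
`1 := (e,1)` and `(u,h)⁻¹ := (e,h⁻¹)` satisfies all the digroup axioms. -/
theorem prod_digroup {H M : Type*} [Group H] [MulAction H M]
    (e : M) (he : ∀ h : H, h • e = e) :
    (∀ x y z : M × H, prodLhd (prodLhd x y) z = prodLhd x (prodLhd y z)) ∧
    (∀ x y z : M × H, prodDhv (prodDhv x y) z = prodDhv x (prodDhv y z)) ∧
    (∀ x y z : M × H, prodLhd x (prodDhv y z) = prodDhv (prodLhd x y) z) ∧
    (∀ x y z : M × H, prodDhv x (prodLhd y z) = prodDhv x (prodDhv y z)) ∧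
    (∀ x y z : M × H, prodLhd (prodDhv x y) z = prodLhd (prodLhd x y) z) ∧
    (∀ x : M × H, prodLhd (e, (1 : H)) x = x) ∧
    (∀ x : M × H, prodDhv x (e, (1 : H)) = x) ∧
    (∀ x : M × H, prodLhd x (prodInv e x) = (e, (1 : H))) ∧
    (∀ x : M × H, prodDhv (prodInv e x) x = (e, (1 : H))) :=
  ⟨prodLhd_assoc, prodDhv_assoc, prodLhd_prodDhv_assoc,
    fun x _ _ => prodDhv_congr_right x rfl,
    fun _ _ z => prodLhd_congr_left rfl z,
    mk_one_prodLhd e, fun x => prodDhv_mk_one x e,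
    fun x => prodLhd_prodInv (he x.2), prodInv_prodDhv e⟩
end

section
/- Let g be a Lie algebra over a commutative ring R and let D : g → g be a derivation of g (i.e., R-linear with D[x,y] = [Dx,y] + [x,Dy]) satisfying D ∘ D = 0. Then the bilinear bracket defined by [x,y]_D := [Dx, y] satisfies the left Leibniz identity [x,[y,z]_D]_D = [[x,y]_D,z]_D + [y,[x,z]_D]_D for all x,y,z ∈ g. -/
-- A map `T` with `T ⁅T x, y⁆ = ⁅T x, T y⁆` is known as an embedding tensor.
theorem leibniz_lie_apply_iff {L M : Type*} [LieRing L] [AddCommGroup M] [LieRingModule L M]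
    (T : M → L) (x y z : M) :
    ⁅T x, ⁅T y, z⁆⁆ = ⁅T ⁅T x, y⁆, z⁆ + ⁅T y, ⁅T x, z⁆⁆ ↔
      ⁅T ⁅T x, y⁆, z⁆ = ⁅⁅T x, T y⁆, z⁆ := by
  rw [leibniz_lie (T x) (T y) z, add_left_inj, eq_comm]

theorem derivation_bracket_leibniz_general {L : Type*} [LieRing L] (D : L → L)
    (hD : ∀ x y : L, D ⁅x, y⁆ = ⁅D x, y⁆ + ⁅x, D y⁆) (x y z : L) :
    ⁅D x, ⁅D y, z⁆⁆ = ⁅D ⁅D x, y⁆, z⁆ + ⁅D y, ⁅D x, z⁆⁆ ↔ ⁅⁅D (D x), y⁆, z⁆ = 0 := by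
  rw [leibniz_lie_apply_iff, hD, add_lie, add_eq_right]

/-- Let `g` be a Lie algebra over a commutative ring `R` and `D` a derivation
of `g` with `D ∘ D = 0`. Then the bracket `[x,y]_D := [Dx, y]` satisfies the left Leibniz
identity. -/
theorem derivation_bracket_leibniz {R L : Type*} [CommRing R] [LieRing L] [LieAlgebra R L]
    (D : L →ₗ[R] L)
    (hD : ∀ x y : L, D ⁅x, y⁆ = ⁅D x, y⁆ + ⁅x, D y⁆)
    (hD2 : ∀ x : L, D (D x) = 0) :
    ∀ x y z : L,
      (fun a b : L => ⁅D a, b⁆) x ((fun a b : L => ⁅D a, b⁆) y z)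
        = (fun a b : L => ⁅D a, b⁆) ((fun a b : L => ⁅D a, b⁆) x y) z
          + (fun a b : L => ⁅D a, b⁆) y ((fun a b : L => ⁅D a, b⁆) x z) := by
  intro x y z
  exact (derivation_bracket_leibniz_general D hD x y z).mpr (by rw [hD2, zero_lie, zero_lie])
end
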